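/- arXiv:1707.00970 — 3 statements merged into one kernel-verified Lean document; each statement's English description precedes it below -/
import Mathlib

section
/- Let (a,B_a) be a NIS-Lie superalgebra over a field K of characteristic 2 with B_a even, and let (g,B_g) and (g̃,B_{g̃}) be D_od-extensions of (a,B_a) by the pairs (D,a_0) and (D̃,ã_0) respectively, with g = Kx ⊕ a ⊕ Kx* and g̃ = Kx̃ ⊕ a ⊕ Kx̃* (x, x*, x̃, x̃* odd). Suppose π_0 is an isometry of (a,B_a), λ ∈ K is nonzero, and t ∈ a_1 satisfy π_0^{-1}∘D̃∘π_0 = λD + ad_t on a and ã_0 = λ²π_0(a_0) + s_a(π_0(t)) + λπ_0(D(t)). Then for any ν ∈ K, the map π : g → g̃ defined by π(u) = π_0(u) + B_a(t,u)x̃ for u ∈ a_1, π(u) = π_0(u) for u ∈ a_0, π(x) = λx̃, and π(x*) = λ^{-1}(x̃* + π_0(t)) + νx̃, is an adapted isometry. -/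
/-!
Common definitions: Lie superalgebras in characteristic 2 (encoded by their even
part `g0`, odd part `g1`, bracket components and squaring), NIS forms (even and odd),
homogeneous derivations, isometries, ideals, irreducibility, and the structure
formulas of the various double extensions.
-/

namespace Char2DoubleExt

section Defs

variable (K : Type) [Field K]
variable (g0 g1 h0 h1 : Type)
variable [AddCommGroup g0] [Module K g0] [AddCommGroup g1] [Module K g1]
variable [AddCommGroup h0] [Module K h0] [AddCommGroup h1] [Module K h1]

/-- A Lie superalgebra over a field of characteristic 2: `g0` is the even part,
`g1` the odd part, `br0` the bracket on `g0`, `br1` the action of `g0` on `g1`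
(the mixed bracket, extended symmetrically), `br11` the bracket of two odd
elements, and `sq` the squaring, whose polarization is `br11`. -/
structure SuperAlg : Type where
  br0 : g0 →ₗ[K] g0 →ₗ[K] g0
  br1 : g0 →ₗ[K] g1 →ₗ[K] g1
  br11 : g1 →ₗ[K] g1 →ₗ[K] g0
  sq : g1 → g0
  sq_smul : ∀ (c : K) (f : g1), sq (c • f) = (c * c) • sq f
  sq_add : ∀ f g : g1, sq (f + g) = sq f + sq g + br11 f g
  br0_self : ∀ x : g0, br0 x x = 0
  br11_comm : ∀ f g : g1, br11 f g = br11 g f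
  jacobi0 : ∀ x y z : g0, br0 x (br0 y z) + br0 y (br0 z x) + br0 z (br0 x y) = 0
  act_br : ∀ (x y : g0) (f : g1), br1 (br0 x y) f = br1 x (br1 y f) + br1 y (br1 x f)
  jacobi_mix : ∀ (x : g0) (f g : g1),
    br0 x (br11 f g) + br11 f (br1 x g) + br11 g (br1 x f) = 0
  sq_br0 : ∀ (f : g1) (x : g0), br0 (sq f) x = br11 f (br1 x f)
  sq_br1 : ∀ f g : g1, br1 (sq f) g = br1 (br11 f g) f

/-- A non-degenerate invariant supersymmetric *even* bilinear form on a Lie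
superalgebra in characteristic 2: it pairs `g0` with `g0` (component `B0`) and
`g1` with `g1` (component `B1`); mixed pairings vanish by evenness. -/
structure EvenNIS (S : SuperAlg K g0 g1) : Type where
  B0 : g0 →ₗ[K] g0 →ₗ[K] K
  B1 : g1 →ₗ[K] g1 →ₗ[K] K
  symm0 : ∀ x y, B0 x y = B0 y x
  symm1 : ∀ f g, B1 f g = B1 g f
  alt1 : ∀ f, B1 f f = 0
  nondeg0 : ∀ x, (∀ y, B0 x y = 0) → x = 0
  nondeg1 : ∀ f, (∀ g, B1 f g = 0) → f = 0
  inv0 : ∀ x y z, B0 (S.br0 x y) z = B0 x (S.br0 y z)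
  inv1 : ∀ (x : g0) (f g : g1), B1 (S.br1 x f) g = B0 x (S.br11 f g)
  inv2 : ∀ (f g : g1) (x : g0), B0 (S.br11 f g) x = B1 f (S.br1 x g)

/-- A non-degenerate invariant supersymmetric *odd* bilinear form: it pairs `g0`
with `g1` (component `Bo`); like-parity pairings vanish by oddness, and
`B(f,f) = 0` for odd `f` is automatic. -/
structure OddNIS (S : SuperAlg K g0 g1) : Type where
  Bo : g0 →ₗ[K] g1 →ₗ[K] K
  nondeg0 : ∀ x, (∀ f, Bo x f = 0) → x = 0
  nondeg1 : ∀ f, (∀ x, Bo x f = 0) → f = 0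
  inv0 : ∀ (x y : g0) (f : g1), Bo (S.br0 x y) f = Bo x (S.br1 y f)
  inv1 : ∀ (x y : g0) (f : g1), Bo y (S.br1 x f) = Bo x (S.br1 y f)
  inv2 : ∀ f g h : g1, Bo (S.br11 f g) h = Bo (S.br11 g h) f

/-- An even derivation of a Lie superalgebra in characteristic 2. -/
structure EvenDer (S : SuperAlg K g0 g1) : Type where
  D0 : g0 →ₗ[K] g0
  D1 : g1 →ₗ[K] g1
  der0 : ∀ x y, D0 (S.br0 x y) = S.br0 (D0 x) y + S.br0 x (D0 y)
  der1 : ∀ x f, D1 (S.br1 x f) = S.br1 (D0 x) f + S.br1 x (D1 f)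
  der_sq : ∀ f, D0 (S.sq f) = S.br11 (D1 f) f

/-- An odd derivation of a Lie superalgebra in characteristic 2. -/
structure OddDer (S : SuperAlg K g0 g1) : Type where
  D0 : g0 →ₗ[K] g1
  D1 : g1 →ₗ[K] g0
  der0 : ∀ x y, D0 (S.br0 x y) = S.br1 x (D0 y) + S.br1 y (D0 x)
  der1 : ∀ x f, D1 (S.br1 x f) = S.br11 (D0 x) f + S.br0 x (D1 f)
  der_sq : ∀ f, D0 (S.sq f) = S.br1 (D1 f) f

/-- An isometry between Lie superalgebras endowed with even NIS forms: an even
linear bijection preserving brackets, squarings and the bilinear forms. -/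
structure EvenIsometry (S : SuperAlg K g0 g1) (N : EvenNIS K g0 g1 S)
    (S' : SuperAlg K h0 h1) (N' : EvenNIS K h0 h1 S') : Type where
  e0 : g0 ≃ₗ[K] h0
  e1 : g1 ≃ₗ[K] h1
  map_br0 : ∀ x y, e0 (S.br0 x y) = S'.br0 (e0 x) (e0 y)
  map_br1 : ∀ x f, e1 (S.br1 x f) = S'.br1 (e0 x) (e1 f)
  map_br11 : ∀ f g, e0 (S.br11 f g) = S'.br11 (e1 f) (e1 g)
  map_sq : ∀ f, e0 (S.sq f) = S'.sq (e1 f)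
  map_B0 : ∀ x y, N'.B0 (e0 x) (e0 y) = N.B0 x y
  map_B1 : ∀ f g, N'.B1 (e1 f) (e1 g) = N.B1 f g

/-- An isometry between Lie superalgebras endowed with odd NIS forms. -/
structure OddIsometry (S : SuperAlg K g0 g1) (N : OddNIS K g0 g1 S)
    (S' : SuperAlg K h0 h1) (N' : OddNIS K h0 h1 S') : Type where
  e0 : g0 ≃ₗ[K] h0
  e1 : g1 ≃ₗ[K] h1
  map_br0 : ∀ x y, e0 (S.br0 x y) = S'.br0 (e0 x) (e0 y)
  map_br1 : ∀ x f, e1 (S.br1 x f) = S'.br1 (e0 x) (e1 f)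
  map_br11 : ∀ f g, e0 (S.br11 f g) = S'.br11 (e1 f) (e1 g)
  map_sq : ∀ f, e0 (S.sq f) = S'.sq (e1 f)
  map_Bo : ∀ x f, N'.Bo (e0 x) (e1 f) = N.Bo x f

/-- A (graded) ideal of a Lie superalgebra in characteristic 2, given by its
even part `I0` and odd part `I1`. -/
def IsIdealPair (S : SuperAlg K g0 g1) (I0 : Submodule K g0) (I1 : Submodule K g1) : Prop :=
  (∀ x ∈ I0, ∀ y, S.br0 x y ∈ I0) ∧ (∀ x ∈ I0, ∀ f, S.br1 x f ∈ I1) ∧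
  (∀ f ∈ I1, ∀ x : g0, S.br1 x f ∈ I1) ∧ (∀ f ∈ I1, ∀ g, S.br11 f g ∈ I0) ∧
  (∀ f ∈ I1, S.sq f ∈ I0)

/-- Irreducibility of a NIS-Lie superalgebra with an even form: it is not the
direct sum of two nonzero mutually orthogonal ideals. -/
def EvenIrreducible (S : SuperAlg K g0 g1) (N : EvenNIS K g0 g1 S) : Prop :=
  ¬ ∃ (I0 J0 : Submodule K g0) (I1 J1 : Submodule K g1),
      IsIdealPair K g0 g1 S I0 I1 ∧ IsIdealPair K g0 g1 S J0 J1 ∧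
      (I0 ≠ ⊥ ∨ I1 ≠ ⊥) ∧ (J0 ≠ ⊥ ∨ J1 ≠ ⊥) ∧
      I0 ⊓ J0 = ⊥ ∧ I0 ⊔ J0 = ⊤ ∧ I1 ⊓ J1 = ⊥ ∧ I1 ⊔ J1 = ⊤ ∧
      (∀ x ∈ I0, ∀ y ∈ J0, N.B0 x y = 0) ∧ (∀ f ∈ I1, ∀ g ∈ J1, N.B1 f g = 0)

/-- Irreducibility of a NIS-Lie superalgebra with an odd form. -/
def OddIrreducible (S : SuperAlg K g0 g1) (N : OddNIS K g0 g1 S) : Prop :=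
  ¬ ∃ (I0 J0 : Submodule K g0) (I1 J1 : Submodule K g1),
      IsIdealPair K g0 g1 S I0 I1 ∧ IsIdealPair K g0 g1 S J0 J1 ∧
      (I0 ≠ ⊥ ∨ I1 ≠ ⊥) ∧ (J0 ≠ ⊥ ∨ J1 ≠ ⊥) ∧
      I0 ⊓ J0 = ⊥ ∧ I0 ⊔ J0 = ⊤ ∧ I1 ⊓ J1 = ⊥ ∧ I1 ⊔ J1 = ⊤ ∧
      (∀ x ∈ I0, ∀ g ∈ J1, N.Bo x g = 0) ∧ (∀ y ∈ J0, ∀ f ∈ I1, N.Bo y f = 0)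

/-- An ideal of a Lie superalgebra given as a pair of subsets (closed under the
vector space operations, brackets with arbitrary elements, and the squaring). -/
def IsIdealSet (S : SuperAlg K g0 g1) (I0 : Set g0) (I1 : Set g1) : Prop :=
  ((0 : g0) ∈ I0) ∧ (∀ x y, x ∈ I0 → y ∈ I0 → x + y ∈ I0) ∧
  (∀ (c : K) x, x ∈ I0 → c • x ∈ I0) ∧
  ((0 : g1) ∈ I1) ∧ (∀ f g, f ∈ I1 → g ∈ I1 → f + g ∈ I1) ∧
  (∀ (c : K) f, f ∈ I1 → c • f ∈ I1) ∧
  (∀ x ∈ I0, ∀ y, S.br0 x y ∈ I0) ∧ (∀ x ∈ I0, ∀ f, S.br1 x f ∈ I1) ∧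
  (∀ f ∈ I1, ∀ x : g0, S.br1 x f ∈ I1) ∧ (∀ f ∈ I1, ∀ g, S.br11 f g ∈ I0) ∧
  (∀ f ∈ I1, S.sq f ∈ I0)

/-- The even part of the center of a Lie superalgebra. -/
def zEven (S : SuperAlg K g0 g1) : Submodule K g0 :=
  (⨅ y : g0, LinearMap.ker (S.br0.flip y)) ⊓ (⨅ f : g1, LinearMap.ker (S.br1.flip f))

/-- The odd part of the center of a Lie superalgebra. -/
def zOdd (S : SuperAlg K g0 g1) : Submodule K g1 :=
  (⨅ x : g0, LinearMap.ker (S.br1 x)) ⊓ (⨅ g : g1, LinearMap.ker (S.br11.flip g))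

/-- The compatibility conditions between an even NIS `N`, an even derivation `D`
and a quadratic form `al` on the odd part, entering the `D_ev`-extension (even
form case): `B(Du,v)+B(u,Dv)=0`, `B(Du,u)=0` for even `u`, `al` is quadratic and
its polar form is `B(·,D·)`. -/
def DevDataEven (S : SuperAlg K g0 g1) (N : EvenNIS K g0 g1 S)
    (D : EvenDer K g0 g1 S) (al : g1 → K) : Prop :=
  (∀ x y : g0, N.B0 (D.D0 x) y + N.B0 x (D.D0 y) = 0) ∧
  (∀ f g : g1, N.B1 (D.D1 f) g + N.B1 f (D.D1 g) = 0) ∧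
  (∀ x : g0, N.B0 (D.D0 x) x = 0) ∧
  (∀ (c : K) (f : g1), al (c • f) = c * c * al f) ∧
  (∀ f g : g1, N.B1 f (D.D1 g) = al (f + g) - al f - al g)

/-- The structure constants of the `D_ev`-extension `g = Kx ⊕ a ⊕ Kx*` (even
form, even `x`, `x*`); an element of the even part is written `(r, u, s)` for
`r x + u + s x*`, and the constant `c` is the (arbitrary) value `B_g(x*,x*)`. -/
def DevExtEvenFormulas (S : SuperAlg K g0 g1) (N : EvenNIS K g0 g1 S)
    (D : EvenDer K g0 g1 S) (al : g1 → K) (c : K)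
    (T : SuperAlg K (K × g0 × K) g1) (M : EvenNIS K (K × g0 × K) g1 T) : Prop :=
  (∀ (r s r' s' : K) (u u' : g0),
      T.br0 (r, u, s) (r', u', s')
        = (N.B0 (D.D0 u) u', S.br0 u u' + s • D.D0 u' + s' • D.D0 u, 0)) ∧
  (∀ (r s : K) (u : g0) (f : g1), T.br1 (r, u, s) f = S.br1 u f + s • D.D1 f) ∧
  (∀ f : g1, T.sq f = (al f, S.sq f, 0)) ∧
  (∀ (r s r' s' : K) (u u' : g0),
      M.B0 (r, u, s) (r', u', s') = N.B0 u u' + r * s' + r' * s + c * (s * s')) ∧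
  (∀ f g : g1, M.B1 f g = N.B1 f g)

/-- The compatibility conditions between an even NIS `N`, an odd derivation `D`
and an even element `w = a₀`, entering the `D_od`-extension (even form case):
`B(Du,v) = B(u,Dv)`, `D² = ad_w`, `D(w) = 0`. -/
def DodDataEven (S : SuperAlg K g0 g1) (N : EvenNIS K g0 g1 S)
    (D : OddDer K g0 g1 S) (w : g0) : Prop :=
  (∀ (x : g0) (f : g1), N.B1 (D.D0 x) f = N.B0 x (D.D1 f)) ∧
  (∀ x : g0, D.D1 (D.D0 x) = S.br0 w x) ∧
  (∀ f : g1, D.D0 (D.D1 f) = S.br1 w f) ∧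
  D.D0 w = 0

/-- The structure constants of the `D_od`-extension `g = Kx ⊕ a ⊕ Kx*` (even
form, odd `x`, `x*`); an element of the odd part is written `(r, u, t)` for
`r x + u + t x*`. -/
def DodExtEvenFormulas (S : SuperAlg K g0 g1) (N : EvenNIS K g0 g1 S)
    (D : OddDer K g0 g1 S) (w : g0)
    (T : SuperAlg K g0 (K × g1 × K)) (M : EvenNIS K g0 (K × g1 × K) T) : Prop :=
  (∀ x y : g0, T.br0 x y = S.br0 x y) ∧
  (∀ (x : g0) (r t : K) (u : g1),
      T.br1 x (r, u, t) = (N.B1 (D.D0 x) u, S.br1 x u + t • D.D0 x, 0)) ∧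
  (∀ (r t : K) (u : g1), T.sq (r, u, t) = S.sq u + (t * t) • w + t • D.D1 u) ∧
  (∀ x y : g0, M.B0 x y = N.B0 x y) ∧
  (∀ (r t r' t' : K) (u u' : g1),
      M.B1 (r, u, t) (r', u', t') = N.B1 u u' + r * t' + r' * t)

/-- The compatibility conditions between an odd NIS `No`, an odd derivation `D`,
an even element `w = a₀` and a quadratic form `al`, entering the
`D_od`-extension (odd form case). -/
def DodDataOdd (S : SuperAlg K g0 g1) (No : OddNIS K g0 g1 S)
    (D : OddDer K g0 g1 S) (w : g0) (al : g1 → K) : Prop :=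
  (∀ x y : g0, No.Bo y (D.D0 x) + No.Bo x (D.D0 y) = 0) ∧
  (∀ f g : g1, No.Bo (D.D1 f) g + No.Bo (D.D1 g) f = 0) ∧
  (∀ x : g0, No.Bo x (D.D0 x) = 0) ∧
  (∀ x : g0, D.D1 (D.D0 x) = S.br0 w x) ∧
  (∀ f : g1, D.D0 (D.D1 f) = S.br1 w f) ∧
  D.D0 w = 0 ∧
  (∀ (c : K) (f : g1), al (c • f) = c * c * al f) ∧
  (∀ f g : g1, al (f + g) - al f - al g = No.Bo (D.D1 f) g)

/-- The structure constants of the `D_od`-extension `g = Kx ⊕ a ⊕ Ke` (odd form,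
even `x`, odd `e`); an even element is written `(r, u)` for `r x + u`, an odd
element `(v, μ)` for `v + μ e`. -/
def DodExtOddFormulas (S : SuperAlg K g0 g1) (No : OddNIS K g0 g1 S)
    (D : OddDer K g0 g1 S) (w : g0) (al : g1 → K) (m : K)
    (T : SuperAlg K (K × g0) (g1 × K)) (M : OddNIS K (K × g0) (g1 × K) T) : Prop :=
  (∀ (r r' : K) (x y : g0), T.br0 (r, x) (r', y) = (No.Bo y (D.D0 x), S.br0 x y)) ∧
  (∀ (r μ : K) (x : g0) (v : g1), T.br1 (r, x) (v, μ) = (S.br1 x v + μ • D.D0 x, 0)) ∧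
  (∀ (μ : K) (v : g1),
      T.sq (v, μ) = (μ * μ * m + al v, S.sq v + (μ * μ) • w + μ • D.D1 v)) ∧
  (∀ (r μ : K) (x : g0) (v : g1), M.Bo (r, x) (v, μ) = No.Bo x v + r * μ)

/-- The compatibility condition between an odd NIS `No` and an even derivation
`D`, entering the `D_ev`-extension (odd form case): `B(Du,v)+B(u,Dv)=0`. -/
def DevDataOdd (S : SuperAlg K g0 g1) (No : OddNIS K g0 g1 S)
    (D : EvenDer K g0 g1 S) : Prop :=
  ∀ (x : g0) (v : g1), No.Bo (D.D0 x) v + No.Bo x (D.D1 v) = 0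

/-- The structure constants of the `D_ev`-extension `g = Kx ⊕ a ⊕ Ke` (odd form,
odd `x`, even `e`); an even element is written `(u, ν)` for `u + ν e`, an odd
element `(μ, v)` for `μ x + v`. -/
def DevExtOddFormulas (S : SuperAlg K g0 g1) (No : OddNIS K g0 g1 S)
    (D : EvenDer K g0 g1 S)
    (T : SuperAlg K (g0 × K) (K × g1)) (M : OddNIS K (g0 × K) (K × g1) T) : Prop :=
  (∀ (ν ν' : K) (x y : g0),
      T.br0 (x, ν) (y, ν') = (S.br0 x y + ν • D.D0 y + ν' • D.D0 x, 0)) ∧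
  (∀ (ν μ : K) (x : g0) (v : g1),
      T.br1 (x, ν) (μ, v) = (No.Bo (D.D0 x) v, S.br1 x v + ν • D.D1 v)) ∧
  (∀ (μ : K) (v : g1), T.sq (μ, v) = (S.sq v, 0)) ∧
  (∀ (ν μ : K) (x : g0) (v : g1), M.Bo (x, ν) (μ, v) = No.Bo x v + ν * μ)

end Defs

end Char2DoubleExt

namespace Char2DoubleExt

/-!
An element `r x + u + s x*` with `s = λ m` is sent to
`(λ r + B(t, u) + λ m ν) x̃ + π₀(u + m t) + m x̃*`. Odd brackets are the polarization of the
squaring, so only the mixed bracket, the squaring and the form have to be checked. For the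
squaring, the coefficient of `m` compares `D` with `D̃` and that of `m²` gives the formula for `ã₀`,
the remaining terms occurring twice. For the mixed bracket, the coefficients of `x̃` agree because
invariance makes `[z, ·]` self-adjoint on the odd part and `B([z, t], t) = 0`.
-/

section Development

variable {K a0 a1 b0 b1 : Type} [Field K]
  [AddCommGroup a0] [Module K a0] [AddCommGroup a1] [Module K a1]
  [AddCommGroup b0] [Module K b0] [AddCommGroup b1] [Module K b1]

theorem SuperAlg.br11_self [CharP K 2] (S : SuperAlg K a0 a1) (f : a1) : S.br11 f f = 0 := by
  have hsq : ((2 : K) * 2) • S.sq f = S.sq f + S.sq f + S.br11 f f := by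
    rw [← S.sq_smul, two_smul, S.sq_add]
  linear_combination (norm := module) (CharTwo.two_eq_zero (R := K)) • S.sq f - hsq

theorem SuperAlg.map_br11_of_map_sq {S : SuperAlg K a0 a1} {S' : SuperAlg K b0 b1}
    {e0 : a0 →ₗ[K] b0} {e1 : a1 →ₗ[K] b1} (h : ∀ f, e0 (S.sq f) = S'.sq (e1 f)) (f g : a1) :
    e0 (S.br11 f g) = S'.br11 (e1 f) (e1 g) := by
  have hadd := h (f + g)
  rw [S.sq_add, map_add, map_add, map_add, S'.sq_add, h, h] at hadd
  exact add_left_cancel hadd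

variable {S : SuperAlg K a0 a1} {S' : SuperAlg K b0 b1}

theorem EvenNIS.B1_br1_left (N : EvenNIS K a0 a1 S) (x : a0) (f g : a1) :
    N.B1 (S.br1 x f) g = N.B1 f (S.br1 x g) := by
  rw [N.inv1, N.symm0, N.inv2]

theorem EvenNIS.B1_br1_self [CharP K 2] (N : EvenNIS K a0 a1 S) (x : a0) (f : a1) :
    N.B1 (S.br1 x f) f = 0 := by
  rw [N.inv1, S.br11_self, map_zero]

/-- The linear bijection `Kx ⊕ a₁ ⊕ Kx* → Kx̃ ⊕ b₁ ⊕ Kx̃*` with `x ↦ λ x̃`, `u ↦ p u + φ(u) x̃` and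
`x* ↦ λ⁻¹ (x̃* + p t) + ν x̃`. For `φ = B(t, ·)` it is the odd part of the isometry between two
`D_od`-extensions; the triple `(r, u, s)` stands for `r x + u + s x*`. -/
def dodOddEquiv (φ : a1 →ₗ[K] K) (p : a1 ≃ₗ[K] b1) {lam : K} (hlam : lam ≠ 0) (t : a1) (ν : K) :
    (K × a1 × K) ≃ₗ[K] (K × b1 × K) where
  toFun f := (lam * f.1 + φ f.2.1 + f.2.2 * ν, p (f.2.1 + (lam⁻¹ * f.2.2) • t), lam⁻¹ * f.2.2)
  invFun g := (lam⁻¹ * (g.1 - φ (p.symm g.2.1 - g.2.2 • t) - lam * g.2.2 * ν),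
    p.symm g.2.1 - g.2.2 • t, lam * g.2.2)
  map_add' f g := by
    ext <;> simp only [Prod.fst_add, Prod.snd_add, map_add, map_smul]
    · ring
    · module
    · ring
  map_smul' c f := by
    ext <;> simp only [Prod.smul_fst, Prod.smul_snd, map_add, map_smul, smul_eq_mul,
      RingHom.id_apply]
    · ring
    · module
    · ring
  left_inv f := by
    ext <;> simp only [LinearEquiv.symm_apply_apply, add_sub_cancel_right,
      mul_inv_cancel_left₀ hlam]
    field_simp
    ring
  right_inv g := by
    ext <;> simp only [inv_mul_cancel_left₀ hlam, mul_inv_cancel_left₀ hlam, sub_add_cancel,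
      LinearEquiv.apply_symm_apply]
    ring

section dodOddEquiv

variable (φ : a1 →ₗ[K] K) (p : a1 ≃ₗ[K] b1) {lam : K} (hlam : lam ≠ 0) (t : a1) (ν : K)

theorem dodOddEquiv_apply (r s : K) (u : a1) :
    dodOddEquiv φ p hlam t ν (r, u, s)
      = (lam * r + φ u + s * ν, p u + (lam⁻¹ * s) • p t, lam⁻¹ * s) := by
  simp only [dodOddEquiv, LinearEquiv.coe_mk, LinearMap.coe_mk, AddHom.coe_mk, map_add, map_smul]

theorem dodOddEquiv_apply_mul (r m : K) (u : a1) :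
    dodOddEquiv φ p hlam t ν (r, u, lam * m)
      = (lam * r + φ u + lam * m * ν, p (u + m • t), m) := by
  rw [dodOddEquiv_apply, inv_mul_cancel_left₀ hlam, map_add, map_smul]

theorem dodOddEquiv_apply_zero (r : K) (u : a1) :
    dodOddEquiv φ p hlam t ν (r, u, 0) = (lam * r + φ u, p u, 0) := by
  simp [dodOddEquiv_apply]

end dodOddEquiv

section DodExtension

variable [CharP K 2] {N : EvenNIS K a0 a1 S} {N' : EvenNIS K b0 b1 S'}
  {D : OddDer K a0 a1 S} {D' : OddDer K b0 b1 S'} {w : a0} {w' : b0}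
  {T : SuperAlg K a0 (K × a1 × K)} {M : EvenNIS K a0 (K × a1 × K) T}
  {T' : SuperAlg K b0 (K × b1 × K)} {M' : EvenNIS K b0 (K × b1 × K) T'}
  (hT : DodExtEvenFormulas K a0 a1 S N D w T M)
  (hT' : DodExtEvenFormulas K b0 b1 S' N' D' w' T' M')
  (p : EvenIsometry K a0 a1 b0 b1 S N S' N') {lam : K} (hlam : lam ≠ 0) {t : a1}

include hT hT'

theorem dodOddEquiv_map_B1 (ν : K) (f g : K × a1 × K) :
    M'.B1 (dodOddEquiv (N.B1 t) p.e1 hlam t ν f) (dodOddEquiv (N.B1 t) p.e1 hlam t ν g)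
      = M.B1 f g := by
  obtain ⟨-, -, -, -, hM⟩ := hT
  obtain ⟨-, -, -, -, hM'⟩ := hT'
  obtain ⟨r, u, s⟩ := f
  obtain ⟨r', u', s'⟩ := g
  obtain ⟨m, rfl⟩ : lam ∣ s := hlam.isUnit.dvd
  obtain ⟨m', rfl⟩ : lam ∣ s' := hlam.isUnit.dvd
  have hB : N.B1 (u + m • t) (u' + m' • t)
      = N.B1 u u' + m' * N.B1 t u + m * N.B1 t u' := by
    simp only [map_add, map_smul, LinearMap.add_apply, LinearMap.smul_apply, smul_eq_mul,
      N.alt1, N.symm1 u t]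
    ring
  rw [dodOddEquiv_apply_mul, dodOddEquiv_apply_mul, hM, hM', p.map_B1, hB]
  linear_combination (m' * N.B1 t u + m * N.B1 t u' + lam * m * m' * ν) *
    CharTwo.two_eq_zero (R := K)

theorem dodOddEquiv_map_sq (φ : a1 →ₗ[K] K)
    (hD : ∀ f, D'.D1 (p.e1 f) = p.e0 (lam • D.D1 f + S.br11 t f))
    (hw : w' = p.e0 ((lam * lam) • w + S.sq t + lam • D.D1 t))
    (ν : K) (f : K × a1 × K) :
    p.e0 (T.sq f) = T'.sq (dodOddEquiv φ p.e1 hlam t ν f) := by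
  obtain ⟨-, -, hsq, -, -⟩ := hT
  obtain ⟨-, -, hsq', -, -⟩ := hT'
  obtain ⟨r, u, s⟩ := f
  obtain ⟨m, rfl⟩ : lam ∣ s := hlam.isUnit.dvd
  have hsq_twist : S.sq u + ((lam * m) * (lam * m)) • w + (lam * m) • D.D1 u
      = S.sq (u + m • t) + (m * m) • ((lam * lam) • w + S.sq t + lam • D.D1 t)
        + m • (lam • D.D1 (u + m • t) + S.br11 t (u + m • t)) := by
    simp only [S.sq_add, S.sq_smul, map_add, map_smul, S.br11_self, S.br11_comm u t]
    linear_combination (norm := module) -(CharTwo.two_eq_zero (R := K)) •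
      ((m * m) • S.sq t + m • S.br11 t u + (m * m * lam) • D.D1 t)
  rw [dodOddEquiv_apply_mul, hsq, hsq', hsq_twist, hw, hD, ← p.map_sq, map_add p.e0,
    map_add p.e0, map_smul p.e0, map_smul p.e0]

theorem dodOddEquiv_map_br1
    (hD : ∀ x, D'.D0 (p.e0 x) = p.e1 (lam • D.D0 x + S.br1 x t))
    (ν : K) (x : a0) (f : K × a1 × K) :
    dodOddEquiv (N.B1 t) p.e1 hlam t ν (T.br1 x f)
      = T'.br1 (p.e0 x) (dodOddEquiv (N.B1 t) p.e1 hlam t ν f) := by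
  obtain ⟨-, hbr, -, -, -⟩ := hT
  obtain ⟨-, hbr', -, -, -⟩ := hT'
  obtain ⟨r, u, s⟩ := f
  obtain ⟨m, rfl⟩ : lam ∣ s := hlam.isUnit.dvd
  have hx : N.B1 (lam • D.D0 x + S.br1 x t) (u + m • t)
      = lam * N.B1 (D.D0 x) u + N.B1 t (S.br1 x u + (lam * m) • D.D0 x) := by
    simp only [map_add, map_smul, LinearMap.add_apply, LinearMap.smul_apply, smul_eq_mul,
      N.B1_br1_self, N.B1_br1_left x t u, N.symm1 t (D.D0 x)]
    ring
  have hu : S.br1 x (u + m • t) + m • (lam • D.D0 x + S.br1 x t)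
      = S.br1 x u + (lam * m) • D.D0 x := by
    rw [map_add, map_smul]
    linear_combination (norm := module) (CharTwo.two_eq_zero (R := K)) • (m • S.br1 x t)
  rw [dodOddEquiv_apply_mul, hbr, hbr', dodOddEquiv_apply_zero, hD, p.map_B1, hx, ← p.map_br1,
    ← map_smul p.e1, ← map_add p.e1, hu]

/-- The isometry of `D_od`-extensions extending `p : a → b`, when `p⁻¹ ∘ D' ∘ p = λ D + ad_t` and
`w'` is the corresponding transform of `w`. -/
def dodIsometry
    (hD0 : ∀ x, D'.D0 (p.e0 x) = p.e1 (lam • D.D0 x + S.br1 x t))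
    (hD1 : ∀ f, D'.D1 (p.e1 f) = p.e0 (lam • D.D1 f + S.br11 t f))
    (hw : w' = p.e0 ((lam * lam) • w + S.sq t + lam • D.D1 t))
    (ν : K) :
    EvenIsometry K a0 (K × a1 × K) b0 (K × b1 × K) T M T' M' where
  e0 := p.e0
  e1 := dodOddEquiv (N.B1 t) p.e1 hlam t ν
  map_br0 x y := by rw [hT.1, hT'.1, p.map_br0]
  map_br1 := dodOddEquiv_map_br1 hT hT' p hlam hD0 ν
  map_br11 := SuperAlg.map_br11_of_map_sq (e0 := p.e0.toLinearMap)
    (e1 := (dodOddEquiv (N.B1 t) p.e1 hlam t ν).toLinearMap)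
    (dodOddEquiv_map_sq hT hT' p hlam (N.B1 t) hD1 hw ν)
  map_sq := dodOddEquiv_map_sq hT hT' p hlam (N.B1 t) hD1 hw ν
  map_B0 x y := by rw [hT.2.2.2.1, hT'.2.2.2.1, p.map_B0]
  map_B1 := dodOddEquiv_map_B1 hT hT' p hlam ν

end DodExtension

theorem stmt8_general [CharP K 2] {N : EvenNIS K a0 a1 S} {N' : EvenNIS K b0 b1 S'}
    {D : OddDer K a0 a1 S} {D' : OddDer K b0 b1 S'} {w : a0} {w' : b0}
    {T : SuperAlg K a0 (K × a1 × K)} {M : EvenNIS K a0 (K × a1 × K) T}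
    (hT : DodExtEvenFormulas K a0 a1 S N D w T M)
    {T' : SuperAlg K b0 (K × b1 × K)} {M' : EvenNIS K b0 (K × b1 × K) T'}
    (hT' : DodExtEvenFormulas K b0 b1 S' N' D' w' T' M')
    (p : EvenIsometry K a0 a1 b0 b1 S N S' N') {lam : K} (hlam : lam ≠ 0) {t : a1}
    (hD0 : ∀ x, D'.D0 (p.e0 x) = p.e1 (lam • D.D0 x + S.br1 x t))
    (hD1 : ∀ f, D'.D1 (p.e1 f) = p.e0 (lam • D.D1 f + S.br11 t f))
    (hw : w' = p.e0 ((lam * lam) • w + S.sq t + lam • D.D1 t))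
    (ν : K) :
    ∃ π : EvenIsometry K a0 (K × a1 × K) b0 (K × b1 × K) T M T' M',
      (∀ x : a0, π.e0 x = p.e0 x) ∧
      (∀ (r s : K) (u : a1),
        π.e1 (r, u, s)
          = (lam * r + N.B1 t u + s * ν,
             p.e1 u + (lam⁻¹ * s) • p.e1 t, lam⁻¹ * s)) ∧
      (∀ (r : K) (u : a1), ∃ (r' : K) (u' : b1), π.e1 (r, u, 0) = (r', u', 0)) :=
  ⟨dodIsometry hT hT' p hlam hD0 hD1 hw ν, fun _ => rfl,
    fun r s u => dodOddEquiv_apply (N.B1 t) p.e1 hlam t ν r s u,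
    fun r u => ⟨_, _, dodOddEquiv_apply_zero (N.B1 t) p.e1 hlam t ν r u⟩⟩

end Development

/-- Theorem 3.17 of the paper: let `(g, B_g)` and `(g̃, B_g̃)`
be `D_od`-extensions (even form, odd `x`, `x*`) of the same NIS-Lie superalgebra
`(a, B_a)` by the data `(D, a₀)` and `(D̃, ã₀)`. Given an isometry `π₀` of
`(a, B_a)`, a nonzero `λ ∈ K` and odd `t ∈ a_1` with
`π₀⁻¹ ∘ D̃ ∘ π₀ = λD + ad_t` on `a` and
`ã₀ = λ²π₀(a₀) + s_a(π₀(t)) + λπ₀(D(t))`, the prescribed map `π` is an adapted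
isometry `g → g̃`, for any `ν ∈ K`. -/
theorem stmt8 (K : Type) [Field K] [CharP K 2] (a0 a1 : Type)
    [AddCommGroup a0] [Module K a0] [AddCommGroup a1] [Module K a1]
    [FiniteDimensional K a0] [FiniteDimensional K a1]
    (S : SuperAlg K a0 a1) (N : EvenNIS K a0 a1 S)
    (D Dt : OddDer K a0 a1 S) (w wt : a0)
    (hdata : DodDataEven K a0 a1 S N D w)
    (hdatat : DodDataEven K a0 a1 S N Dt wt)
    (T : SuperAlg K a0 (K × a1 × K)) (M : EvenNIS K a0 (K × a1 × K) T)
    (hT : DodExtEvenFormulas K a0 a1 S N D w T M)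
    (Tt : SuperAlg K a0 (K × a1 × K)) (Mt : EvenNIS K a0 (K × a1 × K) Tt)
    (hTt : DodExtEvenFormulas K a0 a1 S N Dt wt Tt Mt)
    (p0 : EvenIsometry K a0 a1 a0 a1 S N S N)
    (lam : K) (hlam : lam ≠ 0) (t : a1)
    (hrel0 : ∀ x : a0, p0.e1.symm (Dt.D0 (p0.e0 x)) = lam • D.D0 x + S.br1 x t)
    (hrel1 : ∀ f : a1, p0.e0.symm (Dt.D1 (p0.e1 f)) = lam • D.D1 f + S.br11 t f)
    (hwt : wt = (lam * lam) • p0.e0 w + S.sq (p0.e1 t) + lam • p0.e0 (D.D1 t))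
    (ν : K) :
    ∃ π : EvenIsometry K a0 (K × a1 × K) a0 (K × a1 × K) T M Tt Mt,
      (∀ x : a0, π.e0 x = p0.e0 x) ∧
      (∀ (r s : K) (u : a1),
        π.e1 (r, u, s)
          = (lam * r + N.B1 t u + s * ν,
             p0.e1 u + (lam⁻¹ * s) • p0.e1 t, lam⁻¹ * s)) ∧
      -- adaptedness: `π(Kx ⊕ a) = Kx̃ ⊕ a`
      (∀ (r : K) (u : a1), ∃ (r' : K) (u' : a1), π.e1 (r, u, 0) = (r', u', 0)) :=
  stmt8_general hT hTt p0 hlam (fun x => p0.e1.symm_apply_eq.mp (hrel0 x))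
    (fun f => p0.e0.symm_apply_eq.mp (hrel1 f)) (by simp [hwt, p0.map_sq]) ν

end Char2DoubleExt
end

section
/- Let (a,B_a) be a NIS-Lie superalgebra over a field K of characteristic 2 with B_a odd. Let D be an odd derivation of a and a_0 ∈ a_0 satisfy B_a(D(u),v) + B_a(u,D(v)) = 0 for all u,v ∈ a, B_a(u,D(u)) = 0 for all u ∈ a_0, D² = ad_{a_0}, and D(a_0) = 0. Let α be a quadratic form on a_1 with polar form B_α(u,v) = B_a(D(u),v), and let m ∈ K. Then on g := Kx ⊕ a ⊕ Ke with x even and e odd, the squaring s_g(u + μe) := s_a(u) + (μ²m + α(u))x + μ²a_0 + μD(u) for u + μe ∈ g_1, together with the bracket [x,g]_g := 0, [u,v]_g := [u,v]_a + B_a(D(u),v)x for u,v ∈ a, and [e,u]_g := D(u), defines a Lie superalgebra structure on g; moreover the bilinear form B_g determined by B_g|_{a×a} = B_a, B_g(a,x) = B_g(a,e) = 0, B_g(x,e) = 1, B_g(x,x) = B_g(e,e) = 0 is odd, non-degenerate, symmetric and invariant, so that (g,B_g) is a NIS-Lie superalgebra (the D_od-extension of (a,B_a) by means of D and a_0). 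-/
namespace Char2DoubleExt

/-!
The extension is performed in two steps. The form `(u, v) ↦ B(Du, v)`, together with its quadratic
refinement `α` on the odd part, is a 2-cocycle with values in the trivial module `K`, so it defines
a central extension `Kx ⊕ a`. The derivation `D` annihilates this cocycle, hence lifts to the
central extension by `D(x) = 0`, and there its square is the inner derivation of `mx + a₀`.
Adjoining an odd element `e` that acts as the lifted derivation and squares to `mx + a₀` gives
`Kx ⊕ a ⊕ Ke`. The form is invariant because the cocycle is the one it forces: the coefficient of
`x` in `[u, v]` has to be `B([u, v], e) = B(u, [v, e]) = B(u, Dv)`.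
-/

theorem charTwo_add_self_eq_zero (R : Type*) {M : Type*} [Semiring R] [CharP R 2]
    [AddCommMonoid M] [Module R M] (v : M) : v + v = 0 := by
  rw [← two_smul R, CharTwo.two_eq_zero, zero_smul]

section DodExtension

variable {K : Type} [Field K] {a0 a1 : Type}
variable [AddCommGroup a0] [Module K a0] [AddCommGroup a1] [Module K a1]

theorem SuperAlg.br0_comm [CharP K 2] (S : SuperAlg K a0 a1) (x y : a0) :
    S.br0 x y = S.br0 y x := by
  have hneg : -S.br0 x y = S.br0 y x := LinearMap.IsAlt.neg S.br0_self x y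
  rw [← hneg, eq_neg_iff_add_eq_zero, charTwo_add_self_eq_zero K]

theorem OddDer.D0_br11 {S : SuperAlg K a0 a1} (D : OddDer K a0 a1 S) (f g : a1) :
    D.D0 (S.br11 f g) = S.br1 (D.D1 f) g + S.br1 (D.D1 g) f := by
  have h := D.der_sq (f + g)
  simp only [S.sq_add, map_add, LinearMap.add_apply, D.der_sq] at h
  linear_combination (norm := abel) h

section CentralExtension

/-- An even 2-cocycle of a Lie superalgebra in characteristic 2 with values in the trivial module
`K`. On the odd part it is given by a quadratic form, which is added to the squaring; the polar form
of `quad` is the cocycle on pairs of odd elements. -/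
structure SuperAlg.TwoCocycle (S : SuperAlg K a0 a1) where
  even : a0 →ₗ[K] a0 →ₗ[K] K
  quad : QuadraticForm K a1
  even_self : ∀ x, even x x = 0
  even_jacobi : ∀ x y z, even x (S.br0 y z) + even y (S.br0 z x) + even z (S.br0 x y) = 0
  even_br11 : ∀ x f g, even x (S.br11 f g) + quad.polarBilin f (S.br1 x g)
    + quad.polarBilin g (S.br1 x f) = 0
  even_sq : ∀ f x, even (S.sq f) x = quad.polarBilin f (S.br1 x f)

variable {S : SuperAlg K a0 a1}

/-- The central extension `Kx ⊕ a` of `a` defined by a 2-cocycle; `(r, u)` stands for `r x + u`. -/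
def SuperAlg.TwoCocycle.centralExtension (c : S.TwoCocycle) : SuperAlg K (K × a0) a1 where
  br0 := LinearMap.mk₂ K (fun p q => (c.even p.2 q.2, S.br0 p.2 q.2))
    (by simp) (by simp) (by simp) (by simp)
  br1 := S.br1 ∘ₗ LinearMap.snd K K a0
  br11 := LinearMap.mk₂ K (fun f g => (c.quad.polarBilin f g, S.br11 f g))
    (by simp) (by simp) (by simp) (by simp)
  sq f := (c.quad f, S.sq f)
  sq_smul t f := by simp [QuadraticMap.map_smul, S.sq_smul]
  sq_add f g := by simp [QuadraticMap.map_add c.quad, S.sq_add]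
  br0_self p := by simp [c.even_self, S.br0_self]
  br11_comm f g := by simp [QuadraticMap.polar_comm c.quad f g, S.br11_comm f g]
  jacobi0 p q r := Prod.ext (c.even_jacobi p.2 q.2 r.2) (S.jacobi0 p.2 q.2 r.2)
  act_br p q f := S.act_br p.2 q.2 f
  jacobi_mix p f g := Prod.ext (c.even_br11 p.2 f g) (S.jacobi_mix p.2 f g)
  sq_br0 f p := Prod.ext (c.even_sq f p.2) (S.sq_br0 f p.2)
  sq_br1 f g := S.sq_br1 f g

/-- The lift of an odd derivation annihilating a 2-cocycle to the central extension `Kx ⊕ a`; it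
vanishes on `x`. -/
def OddDer.lift (D : OddDer K a0 a1 S) (c : S.TwoCocycle)
    (hDc : ∀ x f, c.quad.polarBilin (D.D0 x) f + c.even x (D.D1 f) = 0) :
    OddDer K (K × a0) a1 c.centralExtension where
  D0 := D.D0 ∘ₗ LinearMap.snd K K a0
  D1 := LinearMap.inr K K a0 ∘ₗ D.D1
  der0 p q := D.der0 p.2 q.2
  der1 p f := Prod.ext (hDc p.2 f).symm (D.der1 p.2 f)
  der_sq f := D.der_sq f

end CentralExtension

section OddDerivationExtension

variable {S : SuperAlg K a0 a1}

/-- The conditions `D² = ad_w` and `D(w) = 0`, under which `D` can be realised as the action of an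
odd element whose square is `w`. -/
structure OddDer.SquaresTo (D : OddDer K a0 a1 S) (w : a0) : Prop where
  D1_D0 : ∀ x, D.D1 (D.D0 x) = S.br0 w x
  D0_D1 : ∀ f, D.D0 (D.D1 f) = S.br1 w f
  D0_self : D.D0 w = 0

theorem OddDer.SquaresTo.lift {D : OddDer K a0 a1 S} {w : a0} (hw : D.SquaresTo w)
    {c : S.TwoCocycle} (hDc : ∀ x f, c.quad.polarBilin (D.D0 x) f + c.even x (D.D1 f) = 0)
    (hcw : ∀ x, c.even w x = 0) (m : K) : (D.lift c hDc).SquaresTo (m, w) where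
  D1_D0 p := Prod.ext (hcw p.2).symm (hw.D1_D0 p.2)
  D0_D1 f := hw.D0_D1 f
  D0_self := hw.D0_self

namespace OddDer

variable (D : OddDer K a0 a1 S) (w : a0)

/-- The action of `a₀` on the odd part of `a ⊕ Ke`; `(f, μ)` stands for `f + μ e`. -/
def extensionBr1 : a0 →ₗ[K] (a1 × K) →ₗ[K] (a1 × K) :=
  LinearMap.mk₂ K (fun x v => (S.br1 x v.1 + v.2 • D.D0 x, 0))
    (fun _ _ _ => by simp [add_add_add_comm]) (fun c x v => by simp [smul_comm c v.2])
    (fun _ _ _ => by simp [add_smul, add_add_add_comm]) (fun _ _ _ => by simp [mul_smul])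

/-- The bracket of two odd elements of `a ⊕ Ke`. -/
def extensionBr11 : (a1 × K) →ₗ[K] (a1 × K) →ₗ[K] a0 :=
  LinearMap.mk₂ K (fun v v' => S.br11 v.1 v'.1 + v.2 • D.D1 v'.1 + v'.2 • D.D1 v.1)
    (fun _ _ _ => by
      simp only [Prod.fst_add, Prod.snd_add, map_add, LinearMap.add_apply, add_smul, smul_add]
      abel)
    (fun c v v' => by simp [mul_smul, smul_comm c v'.2])
    (fun _ _ _ => by
      simp only [Prod.fst_add, Prod.snd_add, map_add, add_smul, smul_add]
      abel)
    (fun c v v' => by simp [mul_smul, smul_comm c v.2])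

/-- The squaring on the odd part of `a ⊕ Ke`, normalised by `e² = w`. -/
def extensionSq (v : a1 × K) : a0 := S.sq v.1 + (v.2 * v.2) • w + v.2 • D.D1 v.1

@[simp]
theorem extensionBr1_apply (x : a0) (f : a1) (μ : K) :
    D.extensionBr1 x (f, μ) = (S.br1 x f + μ • D.D0 x, 0) := rfl

@[simp]
theorem extensionBr11_apply (f g : a1) (μ ν : K) :
    D.extensionBr11 (f, μ) (g, ν) = S.br11 f g + μ • D.D1 g + ν • D.D1 f := rfl

@[simp]
theorem extensionSq_apply (f : a1) (μ : K) :
    D.extensionSq w (f, μ) = S.sq f + (μ * μ) • w + μ • D.D1 f := rfl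

theorem extensionSq_smul (t : K) (v : a1 × K) :
    D.extensionSq w (t • v) = (t * t) • D.extensionSq w v := by
  obtain ⟨f, μ⟩ := v
  simp only [Prod.smul_mk, extensionSq_apply, S.sq_smul, map_smul]
  module

theorem extensionBr11_comm (v v' : a1 × K) : D.extensionBr11 v v' = D.extensionBr11 v' v := by
  obtain ⟨f, μ⟩ := v
  obtain ⟨g, ν⟩ := v'
  simp only [extensionBr11_apply, S.br11_comm f g, add_right_comm]

theorem extensionBr1_br0 (x y : a0) (v : a1 × K) :
    D.extensionBr1 (S.br0 x y) v =
      D.extensionBr1 x (D.extensionBr1 y v) + D.extensionBr1 y (D.extensionBr1 x v) := by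
  obtain ⟨f, μ⟩ := v
  simp [S.act_br, D.der0, add_add_add_comm]

variable [CharP K 2]

theorem extensionSq_add (v v' : a1 × K) :
    D.extensionSq w (v + v') =
      D.extensionSq w v + D.extensionSq w v' + D.extensionBr11 v v' := by
  obtain ⟨f, μ⟩ := v
  obtain ⟨g, ν⟩ := v'
  have hsq : (μ + ν) * (μ + ν) = μ * μ + ν * ν := CharTwo.add_mul_self μ ν
  simp only [Prod.mk_add_mk, extensionSq_apply, extensionBr11_apply, S.sq_add, hsq, map_add]
  module

variable {D w}

theorem extension_jacobi_mix (hw : D.SquaresTo w) (x : a0) (v v' : a1 × K) :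
    S.br0 x (D.extensionBr11 v v') + D.extensionBr11 v (D.extensionBr1 x v')
      + D.extensionBr11 v' (D.extensionBr1 x v) = 0 := by
  obtain ⟨f, μ⟩ := v
  obtain ⟨g, ν⟩ := v'
  simp only [extensionBr1_apply, extensionBr11_apply, map_add, map_smul, D.der1, hw.D1_D0,
    S.br11_comm _ (D.D0 x), zero_smul, add_zero]
  linear_combination (norm := module) S.jacobi_mix x f g + charTwo_add_self_eq_zero K
    (μ • S.br0 x (D.D1 g) + ν • S.br0 x (D.D1 f) + (μ * ν) • S.br0 w x
      + ν • S.br11 (D.D0 x) f + μ • S.br11 (D.D0 x) g)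

theorem br0_extensionSq (hw : D.SquaresTo w) (v : a1 × K) (x : a0) :
    S.br0 (D.extensionSq w v) x = D.extensionBr11 v (D.extensionBr1 x v) := by
  obtain ⟨f, μ⟩ := v
  simp only [extensionSq_apply, extensionBr1_apply, extensionBr11_apply, map_add, map_smul,
    LinearMap.add_apply, LinearMap.smul_apply, S.sq_br0, D.der1, hw.D1_D0,
    S.br11_comm f (D.D0 x), S.br0_comm (D.D1 f) x, zero_smul, add_zero]
  linear_combination (norm := module) -charTwo_add_self_eq_zero K (μ • S.br11 (D.D0 x) f)

theorem extensionBr1_extensionSq (hw : D.SquaresTo w) (v v' : a1 × K) :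
    D.extensionBr1 (D.extensionSq w v) v' = D.extensionBr1 (D.extensionBr11 v v') v := by
  obtain ⟨f, μ⟩ := v
  obtain ⟨g, ν⟩ := v'
  refine Prod.ext ?_ rfl
  simp only [extensionSq_apply, extensionBr1_apply, extensionBr11_apply]
  simp only [map_add, map_smul, LinearMap.add_apply, LinearMap.smul_apply, S.sq_br1, D.der_sq,
    D.D0_br11, hw.D0_D1, hw.D0_self]
  linear_combination (norm := module) -charTwo_add_self_eq_zero K (μ • S.br1 (D.D1 g) f)

/-- The Lie superalgebra `a ⊕ Ke` in which the odd element `e` acts on `a` as `D` and squares to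
`w`; an odd element `f + μ e` is written `(f, μ)`. -/
def SquaresTo.extension (hw : D.SquaresTo w) : SuperAlg K a0 (a1 × K) where
  br0 := S.br0
  br1 := D.extensionBr1
  br11 := D.extensionBr11
  sq := D.extensionSq w
  sq_smul := D.extensionSq_smul w
  sq_add := D.extensionSq_add w
  br0_self := S.br0_self
  br11_comm := D.extensionBr11_comm
  jacobi0 := S.jacobi0
  act_br := D.extensionBr1_br0
  jacobi_mix := extension_jacobi_mix hw
  sq_br0 := br0_extensionSq hw
  sq_br1 := extensionBr1_extensionSq hw

end OddDer

end OddDerivationExtension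

namespace OddNIS

variable {S : SuperAlg K a0 a1}

theorem Bo_D0_sq (No : OddNIS K a0 a1 S) (D : OddDer K a0 a1 S) (f : a1) (x : a0) :
    No.Bo x (D.D0 (S.sq f)) = No.Bo (D.D1 f) (S.br1 x f) := by
  rw [D.der_sq, No.inv1]

/-- A quadratic refinement of the bilinear form `(u, v) ↦ B(Du, v)`: this form is alternating on the
even part, and on the odd part it is the polar form of `q`. -/
structure IsQuadraticRefinement (No : OddNIS K a0 a1 S) (D : OddDer K a0 a1 S)
    (q : QuadraticForm K a1) : Prop where
  Bo_D0_self : ∀ x, No.Bo x (D.D0 x) = 0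
  polar_eq : ∀ f g, q.polarBilin f g = No.Bo (D.D1 f) g

namespace IsQuadraticRefinement

variable {No : OddNIS K a0 a1 S} {D : OddDer K a0 a1 S} {q : QuadraticForm K a1}

theorem Bo_D1_comm (h : No.IsQuadraticRefinement D q) (f g : a1) :
    No.Bo (D.D1 f) g = No.Bo (D.D1 g) f := by
  rw [← h.polar_eq, ← h.polar_eq]
  exact QuadraticMap.polar_comm q f g

variable [CharP K 2]

theorem Bo_D0_comm (h : No.IsQuadraticRefinement D q) (x y : a0) :
    No.Bo x (D.D0 y) = No.Bo y (D.D0 x) := by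
  have halt : (No.Bo.compl₂ D.D0).IsAlt := h.Bo_D0_self
  rw [← CharTwo.neg_eq (No.Bo x (D.D0 y))]
  exact halt.neg x y

theorem Bo_br0_D0_cyclic (h : No.IsQuadraticRefinement D q) (x y z : a0) :
    No.Bo (S.br0 y z) (D.D0 x) + No.Bo (S.br0 z x) (D.D0 y) + No.Bo (S.br0 x y) (D.D0 z) = 0 := by
  have hx : No.Bo (S.br0 y z) (D.D0 x) =
      No.Bo (S.br0 x y) (D.D0 z) + No.Bo (S.br0 z x) (D.D0 y) := by
    rw [h.Bo_D0_comm, D.der0, map_add, ← No.inv0, ← No.inv0, S.br0_comm x z]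
  rw [add_assoc, hx, add_comm (No.Bo (S.br0 x y) _), CharTwo.add_self_eq_zero]

theorem Bo_br11_D0_cyclic (h : No.IsQuadraticRefinement D q) (x : a0) (f g : a1) :
    No.Bo (S.br11 f g) (D.D0 x) + No.Bo (D.D1 f) (S.br1 x g) + No.Bo (D.D1 g) (S.br1 x f) = 0 := by
  have hf : No.Bo (D.D1 f) (S.br1 x g) =
      No.Bo (S.br11 f g) (D.D0 x) + No.Bo (D.D1 g) (S.br1 x f) := by
    rw [h.Bo_D1_comm, D.der1, map_add, LinearMap.add_apply, No.inv2, No.inv0, No.inv1 x,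
      S.br11_comm g f]
  linear_combination hf + CharTwo.add_self_eq_zero
    (No.Bo (S.br11 f g) (D.D0 x) + No.Bo (D.D1 g) (S.br1 x f))

/-- The 2-cocycle `(u, v) ↦ B(Du, v)`. -/
def cocycle (h : No.IsQuadraticRefinement D q) : S.TwoCocycle where
  even := No.Bo.flip ∘ₗ D.D0
  quad := q
  even_self := h.Bo_D0_self
  even_jacobi := h.Bo_br0_D0_cyclic
  even_br11 x f g := by
    rw [h.polar_eq, h.polar_eq]
    exact h.Bo_br11_D0_cyclic x f g
  even_sq f x := by
    rw [h.polar_eq]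
    exact No.Bo_D0_sq D f x

theorem polar_cocycle_D0_add_even_D1 (h : No.IsQuadraticRefinement D q) (x : a0) (f : a1) :
    h.cocycle.quad.polarBilin (D.D0 x) f + h.cocycle.even x (D.D1 f) = 0 := by
  have hpolar : h.cocycle.quad.polarBilin (D.D0 x) f = No.Bo (D.D1 f) (D.D0 x) :=
    (h.polar_eq _ _).trans (h.Bo_D1_comm _ _)
  rw [hpolar]
  exact CharTwo.add_self_eq_zero _

theorem cocycle_even_of_D0_eq_zero (h : No.IsQuadraticRefinement D q) {w : a0} (hw : D.D0 w = 0)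
    (x : a0) : h.cocycle.even w x = 0 := by
  simp [cocycle, hw]

end IsQuadraticRefinement

section DoubleExtensionForm

variable (No : OddNIS K a0 a1 S)

/-- The bilinear form on `Kx ⊕ a ⊕ Ke` that extends `B` and makes `x, e` a hyperbolic pair
orthogonal to `a`. -/
def doubleExtensionBo : (K × a0) →ₗ[K] (a1 × K) →ₗ[K] K :=
  No.Bo.compl₁₂ (LinearMap.snd K K a0) (LinearMap.fst K a1 K)
    + (LinearMap.mul K K).compl₁₂ (LinearMap.fst K K a0) (LinearMap.snd K a1 K)

@[simp]
theorem doubleExtensionBo_apply (r μ : K) (x : a0) (f : a1) :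
    No.doubleExtensionBo (r, x) (f, μ) = No.Bo x f + r * μ := rfl

theorem doubleExtensionBo_separatingLeft : No.doubleExtensionBo.SeparatingLeft := by
  rintro ⟨r, x⟩ h
  have hx : x = 0 := No.nondeg0 x fun f => by simpa using h (f, 0)
  have hr : r = 0 := by simpa using h (0, 1)
  rw [hx, hr, Prod.mk_zero_zero]

theorem doubleExtensionBo_separatingRight : No.doubleExtensionBo.SeparatingRight := by
  rintro ⟨f, μ⟩ h
  have hf : f = 0 := No.nondeg1 f fun x => by simpa using h (0, x)
  have hμ : μ = 0 := by simpa using h (1, 0)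
  rw [hf, hμ, Prod.mk_zero_zero]

end DoubleExtensionForm

namespace IsQuadraticRefinement

variable [CharP K 2] {No : OddNIS K a0 a1 S} {D : OddDer K a0 a1 S} {q : QuadraticForm K a1}
variable {w : a0}

/-- The `D_od`-extension `Kx ⊕ a ⊕ Ke` of `a`, with `e² = m x + w`. -/
def doubleExtension (h : No.IsQuadraticRefinement D q) (hw : D.SquaresTo w) (m : K) :
    SuperAlg K (K × a0) (a1 × K) :=
  (hw.lift h.polar_cocycle_D0_add_even_D1 (h.cocycle_even_of_D0_eq_zero hw.D0_self) m).extension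

variable (h : No.IsQuadraticRefinement D q) (hw : D.SquaresTo w) (m : K)

theorem doubleExtension_br0 (r s : K) (x y : a0) :
    (h.doubleExtension hw m).br0 (r, x) (s, y) = (No.Bo y (D.D0 x), S.br0 x y) := rfl

theorem doubleExtension_br1 (r μ : K) (x : a0) (f : a1) :
    (h.doubleExtension hw m).br1 (r, x) (f, μ) = (S.br1 x f + μ • D.D0 x, 0) := rfl

theorem doubleExtension_br11 (f g : a1) (μ ν : K) :
    (h.doubleExtension hw m).br11 (f, μ) (g, ν) =
      (No.Bo (D.D1 f) g, S.br11 f g + μ • D.D1 g + ν • D.D1 f) := by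
  rw [← h.polar_eq]
  simp [doubleExtension, OddDer.SquaresTo.extension, OddDer.lift, cocycle,
    SuperAlg.TwoCocycle.centralExtension]

theorem doubleExtension_sq (f : a1) (μ : K) :
    (h.doubleExtension hw m).sq (f, μ) =
      (μ * μ * m + q f, S.sq f + (μ * μ) • w + μ • D.D1 f) := by
  simp [doubleExtension, OddDer.SquaresTo.extension, OddDer.lift, cocycle,
    SuperAlg.TwoCocycle.centralExtension, add_comm]

theorem doubleExtensionBo_br0 (p p' : K × a0) (v : a1 × K) :
    No.doubleExtensionBo ((h.doubleExtension hw m).br0 p p') v =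
      No.doubleExtensionBo p ((h.doubleExtension hw m).br1 p' v) := by
  obtain ⟨r, x⟩ := p
  obtain ⟨s, y⟩ := p'
  obtain ⟨f, μ⟩ := v
  simp only [doubleExtension_br0, doubleExtension_br1, doubleExtensionBo_apply, map_add, map_smul,
    smul_eq_mul, No.inv0, h.Bo_D0_comm y x]
  ring

theorem doubleExtensionBo_br1 (p p' : K × a0) (v : a1 × K) :
    No.doubleExtensionBo p' ((h.doubleExtension hw m).br1 p v) =
      No.doubleExtensionBo p ((h.doubleExtension hw m).br1 p' v) := by
  obtain ⟨r, x⟩ := p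
  obtain ⟨s, y⟩ := p'
  obtain ⟨f, μ⟩ := v
  simp only [doubleExtension_br1, doubleExtensionBo_apply, map_add, map_smul, mul_zero,
    No.inv1 x y, h.Bo_D0_comm y x]

theorem doubleExtensionBo_br11 (u v v' : a1 × K) :
    No.doubleExtensionBo ((h.doubleExtension hw m).br11 u v) v' =
      No.doubleExtensionBo ((h.doubleExtension hw m).br11 v v') u := by
  obtain ⟨f, μ⟩ := u
  obtain ⟨g, ν⟩ := v
  obtain ⟨k, ξ⟩ := v'
  simp only [doubleExtension_br11, doubleExtensionBo_apply, map_add, map_smul,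
    LinearMap.add_apply, LinearMap.smul_apply, smul_eq_mul, No.inv2 f, h.Bo_D1_comm f]
  ring

/-- The odd NIS form of the `D_od`-extension. -/
def doubleExtensionNIS : OddNIS K (K × a0) (a1 × K) (h.doubleExtension hw m) where
  Bo := No.doubleExtensionBo
  nondeg0 := No.doubleExtensionBo_separatingLeft
  nondeg1 := No.doubleExtensionBo_separatingRight
  inv0 := h.doubleExtensionBo_br0 hw m
  inv1 := h.doubleExtensionBo_br1 hw m
  inv2 := h.doubleExtensionBo_br11 hw m

end IsQuadraticRefinement

end OddNIS

namespace DodDataOdd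

variable {S : SuperAlg K a0 a1} {No : OddNIS K a0 a1 S} {D : OddDer K a0 a1 S} {w : a0}
variable {al : a1 → K}

/-- The quadratic form underlying the map `α` of the extension data. -/
def quadraticForm (hdata : DodDataOdd K a0 a1 S No D w al) : QuadraticForm K a1 where
  toFun := al
  toFun_smul := by
    obtain ⟨-, -, -, -, -, -, hsmul, -⟩ := hdata
    exact hsmul
  exists_companion' := by
    obtain ⟨-, -, -, -, -, -, -, hpolar⟩ := hdata
    refine ⟨No.Bo ∘ₗ D.D1, fun f g => ?_⟩
    linear_combination hpolar f g

theorem isQuadraticRefinement (hdata : DodDataOdd K a0 a1 S No D w al) :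
    No.IsQuadraticRefinement D hdata.quadraticForm :=
  have ⟨_, _, hself, _, _, _, _, hpolar⟩ := hdata
  ⟨hself, hpolar⟩

theorem squaresTo (hdata : DodDataOdd K a0 a1 S No D w al) : D.SquaresTo w :=
  have ⟨_, _, _, hD1D0, hD0D1, hDw, _, _⟩ := hdata
  ⟨hD1D0, hD0D1, hDw⟩

end DodDataOdd

end DodExtension

theorem stmt10_general (K : Type) [Field K] [CharP K 2] (a0 a1 : Type)
    [AddCommGroup a0] [Module K a0] [AddCommGroup a1] [Module K a1]
    (S : SuperAlg K a0 a1) (No : OddNIS K a0 a1 S)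
    (D : OddDer K a0 a1 S) (w : a0) (al : a1 → K) (m : K)
    (hdata : DodDataOdd K a0 a1 S No D w al) :
    ∃ (T : SuperAlg K (K × a0) (a1 × K)) (M : OddNIS K (K × a0) (a1 × K) T),
      DodExtOddFormulas K a0 a1 S No D w al m T M :=
  have h := hdata.isQuadraticRefinement
  have hw := hdata.squaresTo
  ⟨h.doubleExtension hw m, h.doubleExtensionNIS hw m,
    h.doubleExtension_br0 hw m, fun r μ x f => h.doubleExtension_br1 hw m r μ x f,
    fun μ f => h.doubleExtension_sq hw m f μ,
    fun r μ x f => No.doubleExtensionBo_apply r μ x f⟩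

/-- Theorem 4.1 of the paper: the `D_od`-extension of a
NIS-Lie superalgebra `(a, B_a)` in characteristic 2 with `B_a` odd, by means of
an odd derivation `D`, an even element `a₀ = w`, a quadratic form `α` with polar
form `B_a(D·,·)`, and a scalar `m ∈ K`, is again a NIS-Lie superalgebra with an
odd form: there is a Lie superalgebra structure on `g = Kx ⊕ a ⊕ Ke` (`x` even,
`e` odd) with the prescribed squaring, bracket and odd bilinear form. -/
theorem stmt10 (K : Type) [Field K] [CharP K 2] (a0 a1 : Type)
    [AddCommGroup a0] [Module K a0] [AddCommGroup a1] [Module K a1]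
    [FiniteDimensional K a0] [FiniteDimensional K a1]
    (S : SuperAlg K a0 a1) (No : OddNIS K a0 a1 S)
    (D : OddDer K a0 a1 S) (w : a0) (al : a1 → K) (m : K)
    (hdata : DodDataOdd K a0 a1 S No D w al) :
    ∃ (T : SuperAlg K (K × a0) (a1 × K)) (M : OddNIS K (K × a0) (a1 × K) T),
      DodExtOddFormulas K a0 a1 S No D w al m T M :=
  stmt10_general K a0 a1 S No D w al m hdata

end Char2DoubleExt
end

section
/- Let (g,B_g) be an irreducible finite-dimensional NIS-Lie superalgebra over a field K of characteristic 2 with B_g odd. If z(g)_0 ≠ {0}, then (g,B_g) is obtained as a D_od-extension (odd-form type, with an even central element x and an odd element e) of a NIS-Lie superalgebra (a,B_a) of dimension dim(g) − 2. -/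
namespace Char2DoubleExt

/-!
Let `x` be a nonzero even central element. The form is odd and non-degenerate, so it pairs `x` with
some odd `e`, `B(x, e) = 1`, and `Kx ⊕ Ke` is a hyperbolic plane with orthogonal complement `a`.
Since `x` is central, `[g, g]` is orthogonal to `x`; hence brackets and squares of elements of `a`
leave `a` only along `x`, and projecting along `x` makes `a` a Lie superalgebra, a model of
`x^⊥ / Kx`. What the projection discards is measured by pairing with `e`: by invariance
`B([u, v], e) = B(D u, v)` for `D = ad e`, and `α(u) = B(s(u), e)` has polar form `B(D u, v)`.
Finally `D² = ad s(e)`, so `a_0` is the projection of `s(e)`.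
-/

section LinearAlgebra

open Submodule

theorem add_eq_zero_iff_eq (R : Type*) {M : Type*} [Ring R] [CharP R 2] [AddCommGroup M]
    [Module R M] {a b : M} : a + b = 0 ↔ a = b := by
  rw [add_eq_zero_iff_eq_neg, ← neg_one_smul R b, CharTwo.neg_eq, one_smul]

theorem coe_projectionOnto_ker {R M : Type*} [Ring R] [AddCommGroup M] [Module R M]
    {φ : M →ₗ[R] R} {v : M} (hv : φ v = 1) (hc : IsCompl (LinearMap.ker φ) (span R {v})) (y : M) :
    (projectionOnto _ _ hc y : M) = y - φ y • v := by
  have hker : y - φ y • v ∈ LinearMap.ker φ := by simp [hv]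
  have hspan : φ y • v ∈ span R {v} := smul_mem _ _ (mem_span_singleton_self v)
  have hproj : projectionOnto _ _ hc y = ⟨y - φ y • v, hker⟩ := by
    conv_lhs => rw [← sub_add_cancel y (φ y • v)]
    rw [map_add, projectionOnto_apply_of_mem_left hc hker,
      projectionOnto_apply_of_mem_right hc hspan, add_zero]
  rw [hproj]

variable {K V : Type*} [DivisionRing K] [AddCommGroup V] [Module K V]

theorem isCompl_span_singleton_ker {φ : V →ₗ[K] K} {v : V} (hv : φ v ≠ 0) :
    IsCompl (span K {v}) (LinearMap.ker φ) := by
  have hφ : Function.Surjective φ := LinearMap.surjective fun h => hv (by simp [h])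
  exact (isCompl_span_singleton_of_isCoatom_of_notMem
    (LinearMap.isCoatom_ker_of_surjective hφ) hv).symm

theorem finrank_add_one_of_isCompl_span_singleton [FiniteDimensional K V] {v : V} (hv : v ≠ 0)
    {W : Submodule K V} (hc : IsCompl (span K {v}) W) :
    Module.finrank K W + 1 = Module.finrank K V := by
  rw [← finrank_add_eq_of_isCompl hc, finrank_span_singleton hv, add_comm]

end LinearAlgebra

section Extension

variable {K : Type} [Field K] {g0 g1 : Type}
variable [AddCommGroup g0] [Module K g0] [AddCommGroup g1] [Module K g1]
variable {S : SuperAlg K g0 g1}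

namespace SuperAlg

theorem sq_zero (S : SuperAlg K g0 g1) : S.sq 0 = 0 := by
  simpa using S.sq_smul 0 0

theorem br11_self_s11 [CharP K 2] (S : SuperAlg K g0 g1) (f : g1) : S.br11 f f = 0 := by
  have hdouble : S.sq (f + f) = S.sq f + S.sq f + S.br11 f f := S.sq_add f f
  rwa [(add_eq_zero_iff_eq K).2 rfl, (add_eq_zero_iff_eq K).2 rfl, S.sq_zero, zero_add,
    eq_comm] at hdouble

theorem br11_br1 [CharP K 2] (S : SuperAlg K g0 g1) (x : g0) (f g : g1) :
    S.br11 f (S.br1 x g) = S.br11 (S.br1 x f) g + S.br0 x (S.br11 f g) := by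
  rw [← add_eq_zero_iff_eq K, S.br11_comm _ g, ← S.jacobi_mix x f g]
  abel

end SuperAlg

namespace OddNIS

theorem Bo_br11_rotate (No : OddNIS K g0 g1 S) (f g k : g1) :
    No.Bo (S.br11 f g) k = No.Bo (S.br11 k f) g := by
  rw [No.inv2, No.inv2]

theorem Bo_br0 (No : OddNIS K g0 g1 S) (x y : g0) (f : g1) :
    No.Bo (S.br0 x y) f = No.Bo y (S.br1 x f) := by
  rw [No.inv0, No.inv1]

theorem exists_Bo_eq_one (No : OddNIS K g0 g1 S) {x : g0} (hx : x ≠ 0) : ∃ e, No.Bo x e = 1 := by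
  obtain ⟨f, hf⟩ : ∃ f, No.Bo x f ≠ 0 := by
    by_contra! h
    exact hx (No.nondeg0 x h)
  exact ⟨(No.Bo x f)⁻¹ • f, by simp [hf]⟩

end OddNIS

/-- `(g, B_g)` is the `D_od`-extension, by the derivation `D`, the even element `w = a_0`, the
quadratic form `al = α` and the scalar `m`, of a NIS-Lie superalgebra `(a, M)` carried by the graded
subspace `a = A0 ⊕ A1` of `g`. This is the internal counterpart of `DodExtOddFormulas`: `a` lies in
`g`, and `g = Kx ⊕ a ⊕ Ke` is an internal direct sum. -/
structure IsDodExtension (No : OddNIS K g0 g1 S) (x : g0) (e : g1) {A0 : Submodule K g0}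
    {A1 : Submodule K g1} {T : SuperAlg K A0 A1} (M : OddNIS K A0 A1 T) (D : OddDer K A0 A1 T)
    (w : A0) (al : A1 → K) (m : K) : Prop where
  data : DodDataOdd K A0 A1 T M D w al
  isCompl_even : IsCompl (Submodule.span K {x}) A0
  isCompl_odd : IsCompl (Submodule.span K {e}) A1
  br0_x : ∀ y, S.br0 x y = 0
  br1_x : ∀ f, S.br1 x f = 0
  br0_coe : ∀ u v : A0, S.br0 u v = M.Bo v (D.D0 u) • x + T.br0 u v
  br1_coe : ∀ (u : A0) (f : A1), S.br1 u f = T.br1 u f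
  br1_e : ∀ u : A0, S.br1 u e = D.D0 u
  br11_coe : ∀ f g : A1, S.br11 f g = M.Bo (D.D1 f) g • x + T.br11 f g
  br11_e : ∀ f : A1, S.br11 e f = D.D1 f
  sq_coe : ∀ f : A1, S.sq f = al f • x + T.sq f
  sq_e : S.sq e = m • x + w
  Bo_coe : ∀ (u : A0) (f : A1), No.Bo u f = M.Bo u f
  Bo_x_e : No.Bo x e = 1
  Bo_x_coe : ∀ f : A1, No.Bo x f = 0
  Bo_coe_e : ∀ u : A0, No.Bo u e = 0

theorem IsDodExtension.e_ne_zero {No : OddNIS K g0 g1 S} {x : g0} {e : g1}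
    {A0 : Submodule K g0} {A1 : Submodule K g1} {T : SuperAlg K A0 A1} {M : OddNIS K A0 A1 T}
    {D : OddDer K A0 A1 T} {w : A0} {al : A1 → K} {m : K}
    (h : IsDodExtension No x e M D w al m) : e ≠ 0 := by
  rintro rfl
  simpa using h.Bo_x_e

/-- An even central element `x` together with an odd element `e` dual to it. As the form is odd,
`Kx ⊕ Ke` is then a hyperbolic plane, with orthogonal complement
`ker B(·, e) ⊕ ker B(x, ·)`. -/
structure IsCentralPair (No : OddNIS K g0 g1 S) (x : g0) (e : g1) : Prop where
  br0_left : ∀ y, S.br0 x y = 0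
  br1_left : ∀ f, S.br1 x f = 0
  Bo_eq_one : No.Bo x e = 1

namespace IsCentralPair

variable {No : OddNIS K g0 g1 S} {x : g0} {e : g1}

theorem isCompl_even (h : IsCentralPair No x e) :
    IsCompl (Submodule.span K {x}) (LinearMap.ker (No.Bo.flip e)) :=
  isCompl_span_singleton_ker (by simp [h.Bo_eq_one])

theorem isCompl_odd (h : IsCentralPair No x e) :
    IsCompl (Submodule.span K {e}) (LinearMap.ker (No.Bo x)) :=
  isCompl_span_singleton_ker (by simp [h.Bo_eq_one])

theorem br0_right (h : IsCentralPair No x e) (y : g0) : S.br0 y x = 0 :=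
  LinearMap.IsAlt.isRefl S.br0_self x y (h.br0_left y)

theorem br1_mem_ker (h : IsCentralPair No x e) (y : g0) (f : g1) :
    S.br1 y f ∈ LinearMap.ker (No.Bo x) := by
  rw [LinearMap.mem_ker, ← No.inv0, h.br0_left, map_zero, LinearMap.zero_apply]

variable (h : IsCentralPair No x e)

/-- The projection of the even part onto the orthogonal of `e` along `x`; brackets and squares are
brought back to the orthogonal complement of the pair by it. -/
noncomputable def evenProj : g0 →ₗ[K] LinearMap.ker (No.Bo.flip e) :=
  Submodule.projectionOnto _ _ h.isCompl_even.symm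

theorem coe_evenProj (y : g0) : (h.evenProj y : g0) = y - No.Bo y e • x :=
  coe_projectionOnto_ker (φ := No.Bo.flip e) h.Bo_eq_one _ y

theorem smul_add_evenProj (y : g0) : No.Bo y e • x + h.evenProj y = y := by
  rw [coe_evenProj, add_sub_cancel]

theorem br0_evenProj_left (y z : g0) : S.br0 (h.evenProj y) z = S.br0 y z := by
  simp [coe_evenProj, h.br0_left]

theorem br0_evenProj_right (y z : g0) : S.br0 y (h.evenProj z) = S.br0 y z := by
  simp [coe_evenProj, h.br0_right]

theorem br1_evenProj (y : g0) (f : g1) : S.br1 (h.evenProj y) f = S.br1 y f := by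
  simp [coe_evenProj, h.br1_left]

theorem Bo_evenProj (y : g0) (f : LinearMap.ker (No.Bo x)) :
    No.Bo (h.evenProj y) f = No.Bo y f := by
  simp [coe_evenProj, LinearMap.mem_ker.1 f.2]

theorem coe_evenProj_br11 [CharP K 2] (f : g1) : (h.evenProj (S.br11 e f) : g0) = S.br11 e f := by
  have horth : No.Bo (S.br11 e f) e = 0 := by
    rw [No.inv2, No.inv2, S.br11_self_s11, map_zero, LinearMap.zero_apply]
  rw [coe_evenProj, horth, zero_smul, sub_zero]

/-- The Lie superalgebra `x^⊥ / Kx`, modelled on the orthogonal complement of the pair `x`, `e`. -/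
noncomputable def reduction :
    SuperAlg K (LinearMap.ker (No.Bo.flip e)) (LinearMap.ker (No.Bo x)) where
  br0 := (S.br0.domRestrict₁₂ _ _).compr₂ h.evenProj
  br1 := LinearMap.mk₂ K (fun u f => ⟨S.br1 u f, h.br1_mem_ker u f⟩)
    (fun _ _ _ => Subtype.ext (by simp)) (fun _ _ _ => Subtype.ext (by simp))
    (fun _ _ _ => Subtype.ext (by simp)) (fun _ _ _ => Subtype.ext (by simp))
  br11 := (S.br11.domRestrict₁₂ _ _).compr₂ h.evenProj
  sq f := h.evenProj (S.sq f)
  sq_smul c f := by simp [S.sq_smul]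
  sq_add f g := by simp [S.sq_add, LinearMap.domRestrict₁₂_apply]
  br0_self u := by simp [S.br0_self, LinearMap.domRestrict₁₂_apply]
  br11_comm f g := congrArg h.evenProj (S.br11_comm f g)
  jacobi0 u v w := by
    simp only [LinearMap.compr₂_apply, LinearMap.domRestrict₁₂_apply, h.br0_evenProj_right]
    rw [← map_add, ← map_add, S.jacobi0, map_zero]
  act_br u v f := Subtype.ext <| (h.br1_evenProj _ _).trans (S.act_br u v f)
  jacobi_mix u f g := by
    simp only [LinearMap.compr₂_apply, LinearMap.domRestrict₁₂_apply, LinearMap.mk₂_apply,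
      h.br0_evenProj_right]
    rw [← map_add, ← map_add, S.jacobi_mix, map_zero]
  sq_br0 f u := congrArg h.evenProj <| (h.br0_evenProj_left _ _).trans (S.sq_br0 f u)
  sq_br1 f g := Subtype.ext <|
    (h.br1_evenProj _ _).trans <| (S.sq_br1 f g).trans (h.br1_evenProj _ _).symm

/-- The form that the reduction inherits from `g`. -/
def reductionForm : OddNIS K _ _ h.reduction where
  Bo := No.Bo.domRestrict₁₂ _ _
  nondeg0 u hu := Subtype.ext <| No.nondeg0 u fun f => by
    have hue : No.Bo u e = 0 := u.2
    have huf := hu ⟨f - No.Bo x f • e, by simp [h.Bo_eq_one]⟩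
    simpa [LinearMap.domRestrict₁₂_apply, hue] using huf
  nondeg1 f hf := Subtype.ext <| No.nondeg1 f fun y =>
    (h.Bo_evenProj y f).symm.trans (hf (h.evenProj y))
  inv0 u v f := (h.Bo_evenProj _ f).trans (No.inv0 u v f)
  inv1 u v f := No.inv1 u v f
  inv2 f g k := (h.Bo_evenProj _ k).trans <|
    (No.inv2 f g k).trans (h.Bo_evenProj _ f).symm

/-- The odd derivation `ad e` of the reduction. -/
noncomputable def reductionDer [CharP K 2] : OddDer K _ _ h.reduction where
  D0 := (S.br1.flip e).restrict fun u _ => h.br1_mem_ker u e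
  D1 := h.evenProj ∘ₗ (S.br11 e).domRestrict _
  der0 u v := Subtype.ext <| (h.br1_evenProj _ e).trans (S.act_br u v e)
  der1 u f := (congrArg h.evenProj (S.br11_br1 u e f)).trans <| by
    rw [map_add, ← h.br0_evenProj_right]
    rfl
  der_sq f := Subtype.ext <| (h.br1_evenProj _ e).trans <| by
    rw [S.sq_br1, S.br11_comm]
    exact (h.br1_evenProj _ _).symm

theorem coe_reductionDer_D1 [CharP K 2] (f : LinearMap.ker (No.Bo x)) :
    (h.reductionDer.D1 f : g0) = S.br11 e f :=
  h.coe_evenProj_br11 f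

theorem reductionForm_Bo_D0 [CharP K 2] (u v : LinearMap.ker (No.Bo.flip e)) :
    h.reductionForm.Bo v (h.reductionDer.D0 u) = No.Bo (S.br0 u v) e :=
  (No.Bo_br0 u v e).symm

theorem reductionForm_Bo_D1 [CharP K 2] (f g : LinearMap.ker (No.Bo x)) :
    h.reductionForm.Bo (h.reductionDer.D1 f) g = No.Bo (S.br11 f g) e :=
  (h.Bo_evenProj _ g).trans (No.Bo_br11_rotate f g e).symm

theorem reductionDer_D1_D0 [CharP K 2] (u : LinearMap.ker (No.Bo.flip e)) :
    h.reductionDer.D1 (h.reductionDer.D0 u) = h.reduction.br0 (h.evenProj (S.sq e)) u :=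
  congrArg h.evenProj <| ((h.br0_evenProj_left _ _).trans (S.sq_br0 e u)).symm

theorem reductionDer_D0_D1 [CharP K 2] (f : LinearMap.ker (No.Bo x)) :
    h.reductionDer.D0 (h.reductionDer.D1 f) = h.reduction.br1 (h.evenProj (S.sq e)) f :=
  Subtype.ext <| (h.br1_evenProj _ e).trans <|
    ((h.br1_evenProj _ _).trans (S.sq_br1 e f)).symm

theorem reductionDer_D0_evenProj_sq [CharP K 2] :
    h.reductionDer.D0 (h.evenProj (S.sq e)) = 0 :=
  Subtype.ext <| (h.br1_evenProj _ e).trans <| by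
    rw [S.sq_br1, S.br11_self_s11, map_zero, LinearMap.zero_apply, ZeroMemClass.coe_zero]

theorem reduction_dodDataOdd [CharP K 2] :
    DodDataOdd K _ _ h.reduction h.reductionForm h.reductionDer (h.evenProj (S.sq e))
      (fun f => No.Bo (S.sq f) e) := by
  refine ⟨fun u v => ?_, fun f g => ?_, fun u => ?_, h.reductionDer_D1_D0, h.reductionDer_D0_D1,
    h.reductionDer_D0_evenProj_sq, fun c f => ?_, fun f g => ?_⟩
  · have halt : -S.br0 u v = S.br0 v u := LinearMap.IsAlt.neg S.br0_self (u : g0) v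
    rw [h.reductionForm_Bo_D0, h.reductionForm_Bo_D0, ← halt, map_neg, LinearMap.neg_apply,
      add_neg_cancel]
  · rw [h.reductionForm_Bo_D1, h.reductionForm_Bo_D1, S.br11_comm, CharTwo.add_self_eq_zero]
  · rw [h.reductionForm_Bo_D0, S.br0_self, map_zero, LinearMap.zero_apply]
  · simp [S.sq_smul]
  · simp only [h.reductionForm_Bo_D1, Submodule.coe_add, S.sq_add, map_add, LinearMap.add_apply]
    ring

theorem isDodExtension [CharP K 2] :
    IsDodExtension No x e h.reductionForm h.reductionDer (h.evenProj (S.sq e))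
      (fun f => No.Bo (S.sq f) e) (No.Bo (S.sq e) e) where
  data := h.reduction_dodDataOdd
  isCompl_even := h.isCompl_even
  isCompl_odd := h.isCompl_odd
  br0_x := h.br0_left
  br1_x := h.br1_left
  br0_coe u v := by
    rw [h.reductionForm_Bo_D0]
    exact (h.smul_add_evenProj _).symm
  br1_coe _ _ := rfl
  br1_e _ := rfl
  br11_coe f g := by
    rw [h.reductionForm_Bo_D1]
    exact (h.smul_add_evenProj _).symm
  br11_e f := (h.coe_reductionDer_D1 f).symm
  sq_coe _ := (h.smul_add_evenProj _).symm
  sq_e := (h.smul_add_evenProj _).symm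
  Bo_coe _ _ := rfl
  Bo_x_e := h.Bo_eq_one
  Bo_x_coe f := f.2
  Bo_coe_e u := u.2

end IsCentralPair

end Extension

theorem stmt11_general {K : Type} [Field K] [CharP K 2] {g0 g1 : Type}
    [AddCommGroup g0] [Module K g0] [AddCommGroup g1] [Module K g1]
    {S : SuperAlg K g0 g1} (No : OddNIS K g0 g1 S) {x : g0} (hx : x ≠ 0)
    (hx0 : ∀ y, S.br0 x y = 0) (hx1 : ∀ f, S.br1 x f = 0) :
    ∃ (e : g1) (A0 : Submodule K g0) (A1 : Submodule K g1) (T : SuperAlg K A0 A1)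
      (M : OddNIS K A0 A1 T) (D : OddDer K A0 A1 T) (w : A0) (al : A1 → K) (m : K),
      IsDodExtension No x e M D w al m := by
  obtain ⟨e, hxe⟩ := No.exists_Bo_eq_one hx
  have h : IsCentralPair No x e := ⟨hx0, hx1, hxe⟩
  exact ⟨e, _, _, _, _, _, _, _, _, h.isDodExtension⟩

/-- Proposition 4.2 of the paper: an irreducible
finite-dimensional NIS-Lie superalgebra `(g, B_g)` in characteristic 2 with
`B_g` odd and `z(g)_0 ≠ {0}` is obtained as a `D_od`-extension (odd-form type,
with an even central `x` and an odd element `e`) of a NIS-Lie superalgebra of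
dimension `dim g − 2`. -/
theorem stmt11 (K : Type) [Field K] [CharP K 2] (g0 g1 : Type)
    [AddCommGroup g0] [Module K g0] [AddCommGroup g1] [Module K g1]
    [FiniteDimensional K g0] [FiniteDimensional K g1]
    (S : SuperAlg K g0 g1) (No : OddNIS K g0 g1 S)
    (hirr : OddIrreducible K g0 g1 S No)
    (hz : ∃ x : g0, x ≠ 0 ∧ (∀ y, S.br0 x y = 0) ∧ (∀ f, S.br1 x f = 0)) :
    ∃ (x : g0) (e : g1) (A0 : Submodule K g0) (A1 : Submodule K g1)
      (T : SuperAlg K ↥A0 ↥A1) (M : OddNIS K ↥A0 ↥A1 T)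
      (D : OddDer K ↥A0 ↥A1 T) (w : A0) (al : ↥A1 → K) (m : K),
      -- the data `(D, w, α)` satisfies the compatibility conditions
      DodDataOdd K ↥A0 ↥A1 T M D w al ∧
      -- the decomposition `g = Kx ⊕ a ⊕ Ke`, with `dim a = dim g − 2`
      x ≠ 0 ∧ e ≠ 0 ∧
      Submodule.span K ({x} : Set g0) ⊓ A0 = ⊥ ∧
      Submodule.span K ({x} : Set g0) ⊔ A0 = ⊤ ∧
      Submodule.span K ({e} : Set g1) ⊓ A1 = ⊥ ∧
      Submodule.span K ({e} : Set g1) ⊔ A1 = ⊤ ∧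
      Module.finrank K ↥A0 + 1 = Module.finrank K g0 ∧
      Module.finrank K ↥A1 + 1 = Module.finrank K g1 ∧
      -- `x` is central
      (∀ y : g0, S.br0 x y = 0) ∧ (∀ f : g1, S.br1 x f = 0) ∧
      -- the bracket, action and squaring of `g` are those of the extension
      (∀ u v : A0, S.br0 ↑u ↑v = M.Bo v (D.D0 u) • x + ↑(T.br0 u v)) ∧
      (∀ (u : A0) (f : A1), S.br1 ↑u ↑f = ↑(T.br1 u f)) ∧
      (∀ u : A0, S.br1 ↑u e = ↑(D.D0 u)) ∧
      (∀ f g : A1, S.br11 ↑f ↑g = M.Bo (D.D1 f) g • x + ↑(T.br11 f g)) ∧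
      (∀ f : A1, S.br11 e ↑f = ↑(D.D1 f)) ∧
      (∀ f : A1, S.sq ↑f = al f • x + ↑(T.sq f)) ∧
      S.sq e = m • x + ↑w ∧
      -- the odd bilinear form of `g` is that of the extension
      (∀ (u : A0) (f : A1), No.Bo ↑u ↑f = M.Bo u f) ∧
      No.Bo x e = 1 ∧ (∀ f : A1, No.Bo x ↑f = 0) ∧ (∀ u : A0, No.Bo ↑u e = 0) := by
  obtain ⟨x, hx, hx0, hx1⟩ := hz
  obtain ⟨e, A0, A1, T, M, D, w, al, m, h⟩ := stmt11_general No hx hx0 hx1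
  exact ⟨x, e, A0, A1, T, M, D, w, al, m, h.data, hx, h.e_ne_zero,
    h.isCompl_even.inf_eq_bot, h.isCompl_even.sup_eq_top,
    h.isCompl_odd.inf_eq_bot, h.isCompl_odd.sup_eq_top,
    finrank_add_one_of_isCompl_span_singleton hx h.isCompl_even,
    finrank_add_one_of_isCompl_span_singleton h.e_ne_zero h.isCompl_odd,
    h.br0_x, h.br1_x, h.br0_coe, h.br1_coe, h.br1_e, h.br11_coe, h.br11_e, h.sq_coe, h.sq_e,
    h.Bo_coe, h.Bo_x_e, h.Bo_x_coe, h.Bo_coe_e⟩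

end Char2DoubleExt
end
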